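/- Let m > 0, let B and M be positive integers, and let 0 < R < M. Let d = d_B(R) = 1 + ⌊B(1 − R/M)⌋, and let Ā_1, …, Ā_d be i.i.d. random variables with density f_Ā(ξ) = m (2^ξ − 1)^{m−1} 2^ξ ln 2 / (2^M − 1)^m on [0, M]. Define K_ℓ = Pr( Σ_{k=1}^{d} Ā_k < B R − (B − d) M ) · C(B, B − d) · (m (2^M − 1))^{m d} / (m Γ(m))^{d}. Then, with γ_1, …, γ_B i.i.d. with law μ_m and P^ℓ_out(s, R) = Pr( (1/B) Σ_{b=1}^B min(M, log₂(1 + γ_b s)) < R ), one has lim_{s → ∞} s^{m d} · P^ℓ_out(s, R) = K_ℓ. -/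

import Mathlib

open MeasureTheory ProbabilityTheory Real Filter

/-- Density of the Nakagami-m fading power gain (Gamma distribution, shape m, rate m). -/
noncomputable def fgamma (m x : ℝ) : ℝ :=
  if 0 ≤ x then m ^ m * x ^ (m - 1) * Real.exp (-(m * x)) / Real.Gamma m else 0

/-- The Nakagami-m fading power gain law μ_m. -/
noncomputable def muN (m : ℝ) : Measure ℝ :=
  MeasureTheory.volume.withDensity fun x => ENNReal.ofReal (fgamma m x)

/-- CDF of μ_m. -/
noncomputable def Fgamma (m x : ℝ) : ℝ := ∫ t in (0:ℝ)..x, fgamma m t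

/-- Law of A(s) = log₂(1+γs) for γ ∼ μ_m conditioned on {γ ≤ (2^M-1)/s}. -/
noncomputable def nuA (m : ℝ) (M : ℕ) (s : ℝ) : Measure ℝ :=
  Measure.map (fun x => Real.logb 2 (1 + x * s))
    ((muN m)[|{x : ℝ | x ≤ ((2:ℝ) ^ M - 1) / s}])


/-- The limiting density f_Ā. -/
noncomputable def fAbar (m : ℝ) (M : ℕ) (ξ : ℝ) : ℝ :=
  if 0 ≤ ξ ∧ ξ ≤ (M : ℝ) then
    m * ((2:ℝ) ^ ξ - 1) ^ (m - 1) * (2:ℝ) ^ ξ * Real.log 2 / ((2:ℝ) ^ M - 1) ^ m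
  else 0

/-- The law of the limiting random variable Ā. -/
noncomputable def nuAbar (m : ℝ) (M : ℕ) : Measure ℝ :=
  MeasureTheory.volume.withDensity fun ξ => ENNReal.ofReal (fAbar m M ξ)

/-- The lower bound to the outage probability. -/
noncomputable def PoutL (m : ℝ) (B M : ℕ) (s R : ℝ) : ℝ :=
  ((Measure.pi fun _ : Fin B => muN m)
    {γ : Fin B → ℝ |
      (1 / (B : ℝ)) * ∑ b, min (M : ℝ) (Real.logb 2 (1 + γ b * s)) < R}).toReal

/-!
For `s > 0` the law of the rate `min M (log₂ (1 + γ s))` of one block is `w • σ + q • δ_M`, where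
`w` is a constant times `s ^ (-m)`, `q → 1`, and `σ` is squeezed between multiples of the limiting
law `nuAbar` by factors tending to `1`. Expanding the `B`-fold product of this law over the set `S`
of unsaturated blocks gives weight `w ^ #S`. An outage forces `#S ≥ d`, the Singleton bound, so
after division by `w ^ d` only the `C(B, d)` sets with `#S = d` survive in the limit.
-/

open scoped NNReal ENNReal Topology

section MeasurePi

variable {ι : Type*} [Fintype ι] {X : ι → Type*} [∀ i, MeasurableSpace (X i)]

lemma measurePi_mono {μ ν : ∀ i, Measure (X i)} [∀ i, SigmaFinite (μ i)] (h : ∀ i, μ i ≤ ν i) :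
    Measure.pi μ ≤ Measure.pi ν := by
  have outer_le : (Measure.pi μ).toOuterMeasure ≤
      OuterMeasure.pi fun i ↦ (ν i).toOuterMeasure := by
    refine OuterMeasure.le_pi.2 fun s _ ↦ ?_
    rw [Measure.coe_toOuterMeasure, Measure.pi_pi]
    exact Finset.prod_le_prod' fun i _ ↦ h i (s i)
  refine Measure.le_iff'.2 fun E ↦ ?_
  rw [Measure.pi_def ν]
  exact (outer_le E).trans (le_toMeasure_apply _ _ E)

lemma measurePi_smul (c : ι → ℝ≥0) (μ : ∀ i, Measure (X i)) [∀ i, SigmaFinite (μ i)] :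
    Measure.pi (fun i ↦ c i • μ i) = (∏ i, c i) • Measure.pi μ := by
  refine Measure.pi_eq fun s _ ↦ ?_
  simp only [Measure.smul_apply, Measure.pi_pi, ENNReal.smul_def, smul_eq_mul,
    Finset.prod_mul_distrib, ENNReal.ofNNReal_finsetProd]

lemma measurePi_add [DecidableEq ι] (μ ν : ∀ i, Measure (X i))
    [∀ i, SigmaFinite (μ i)] [∀ i, SigmaFinite (ν i)] :
    Measure.pi (fun i ↦ μ i + ν i) = ∑ S : Finset ι, Measure.pi (S.piecewise μ ν) := by
  have (S : Finset ι) (i : ι) : SigmaFinite (S.piecewise μ ν i) :=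
    S.piecewise_cases μ ν _ inferInstance inferInstance
  refine Measure.pi_eq fun s _ ↦ ?_
  simp only [Measure.finsetSum_apply, Measure.pi_pi, Measure.add_apply, Finset.prod_add,
    Finset.powerset_univ]
  refine Finset.sum_congr rfl fun S _ ↦ ?_
  have split_factors (i : ι) : S.piecewise μ ν i (s i) =
      S.piecewise (fun i ↦ μ i (s i)) (fun i ↦ ν i (s i)) i := by
    by_cases hi : i ∈ S <;> simp [hi]
  simp only [split_factors, Finset.prod_piecewise, Finset.univ_inter]

lemma measureReal_pi_smul_add [DecidableEq ι] (w : ℝ≥0) (μ ν : ∀ i, Measure (X i))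
    [∀ i, IsFiniteMeasure (μ i)] [∀ i, IsFiniteMeasure (ν i)] (G : Set (∀ i, X i)) :
    (Measure.pi fun i ↦ w • μ i + ν i).real G =
      ∑ S : Finset ι, (w : ℝ) ^ S.card * (Measure.pi (S.piecewise μ ν)).real G := by
  have (S : Finset ι) (i : ι) : IsFiniteMeasure (S.piecewise μ ν i) :=
    S.piecewise_cases μ ν _ inferInstance inferInstance
  have pull_out (S : Finset ι) : Measure.pi (S.piecewise (fun i ↦ w • μ i) ν) =
      w ^ S.card • Measure.pi (S.piecewise μ ν) := by
    have : S.piecewise (fun i ↦ w • μ i) ν =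
        fun i ↦ S.piecewise (fun _ ↦ w) 1 i • S.piecewise μ ν i := by
      ext1 i
      by_cases hi : i ∈ S <;> simp [hi]
    rw [this, measurePi_smul, Finset.prod_piecewise]
    simp
  simp only [measurePi_add, pull_out]
  rw [measureReal_def, Measure.finsetSum_apply, ENNReal.toReal_sum fun S _ ↦ by finiteness]
  simp [measureReal_def, ENNReal.smul_def]

lemma measurePreserving_finsetRestrict {μ : ∀ i, Measure (X i)} [∀ i, SigmaFinite (μ i)]
    {S : Finset ι} (hS : ∀ i ∉ S, IsProbabilityMeasure (μ i)) :
    MeasurePreserving S.restrict (Measure.pi μ) (Measure.pi fun i : S ↦ μ i) := by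
  classical
  have (i : {i // i ∉ S}) : IsProbabilityMeasure (μ i) := hS i i.2
  have split := measurePreserving_piEquivPiSubtypeProd μ (· ∈ S)
  convert measurePreserving_fst.comp split
  rfl

end MeasurePi

lemma tendsto_pow_mul_div_pow_of_le {α : Type*} {l : Filter α} {w F : α → ℝ} {L : ℝ} {k d : ℕ}
    (hw : Tendsto w l (𝓝 0)) (hw0 : ∀ᶠ a in l, w a ≠ 0) (hF : Tendsto F l (𝓝 L))
    (hdk : d ≤ k) :
    Tendsto (fun a ↦ w a ^ k * F a / w a ^ d) l (𝓝 (if k = d then L else 0)) := by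
  have pow_sub_mul_eq : (fun a ↦ w a ^ (k - d) * F a) =ᶠ[l] fun a ↦ w a ^ k * F a / w a ^ d := by
    filter_upwards [hw0] with a ha
    rw [pow_sub₀ _ ha hdk]
    ring
  refine Tendsto.congr' pow_sub_mul_eq ?_
  split_ifs with hkd
  · simpa only [hkd, Nat.sub_self, pow_zero, one_mul] using hF
  · simpa only [zero_pow (Nat.sub_ne_zero_of_lt (lt_of_le_of_ne' hdk hkd)), zero_mul] using
      (hw.pow (k - d)).mul hF

/-- Convergence `μ a → ν` along `l` in the Thompson (part) metric on the cone of measures: for every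
`C > 1`, eventually `C⁻¹ • ν ≤ μ a ≤ C • ν`. The two factors are recorded as functions of `a`
tending to `1`. -/
def ThompsonTendsto {α X : Type*} [MeasurableSpace X] (μ : α → Measure X) (l : Filter α)
    (ν : Measure X) : Prop :=
  ∃ c C : α → ℝ≥0, Tendsto c l (𝓝 1) ∧ Tendsto C l (𝓝 1) ∧
    ∀ᶠ a in l, c a • ν ≤ μ a ∧ μ a ≤ C a • ν

namespace ThompsonTendsto

variable {α : Type*} {l : Filter α}

section

variable {X : Type*} [MeasurableSpace X] {μ : α → Measure X} {ν : Measure X}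

lemma smul_of_tendsto_one {q : α → ℝ≥0} (hq : Tendsto q l (𝓝 1)) (ν : Measure X) :
    ThompsonTendsto (fun a ↦ q a • ν) l ν :=
  ⟨q, q, hq, hq, .of_forall fun _ ↦ ⟨le_rfl, le_rfl⟩⟩

lemma withDensity {f : α → X → ℝ≥0∞} {c C : α → ℝ≥0} (hc : Tendsto c l (𝓝 1))
    (hC : Tendsto C l (𝓝 1)) (hf : ∀ᶠ a in l, ∀ᵐ x ∂ν, c a ≤ f a x ∧ f a x ≤ C a) :
    ThompsonTendsto (fun a ↦ ν.withDensity (f a)) l ν := by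
  refine ⟨c, C, hc, hC, hf.mono fun a ha ↦ ⟨?_, ?_⟩⟩
  · calc c a • ν = ν.withDensity fun _ ↦ c a := (withDensity_const _).symm
      _ ≤ ν.withDensity (f a) := withDensity_mono (ha.mono fun _ h ↦ h.1)
  · calc ν.withDensity (f a) ≤ ν.withDensity fun _ ↦ C a :=
          withDensity_mono (ha.mono fun _ h ↦ h.2)
      _ = C a • ν := withDensity_const _

lemma eventually_isFiniteMeasure [IsFiniteMeasure ν] (h : ThompsonTendsto μ l ν) :
    ∀ᶠ a in l, IsFiniteMeasure (μ a) := by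
  obtain ⟨c, C, -, -, hle⟩ := h
  exact hle.mono fun a ha ↦ isFiniteMeasure_of_le _ ha.2

lemma isFiniteMeasure [l.NeBot] (h : ThompsonTendsto μ l ν)
    (hμ : ∀ᶠ a in l, IsFiniteMeasure (μ a)) : IsFiniteMeasure ν := by
  obtain ⟨c, C, hc, -, hle⟩ := h
  obtain ⟨a, _, hca, ha⟩ := (hμ.and ((hc.eventually_ne one_ne_zero).and hle)).exists
  have := isFiniteMeasure_of_le _ ha.1
  rw [← inv_smul_smul₀ hca ν]
  infer_instance

lemma eventually_measure_eq_zero (h : ThompsonTendsto μ l ν) {G : Set X} (hG : ν G = 0) :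
    ∀ᶠ a in l, μ a G = 0 := by
  obtain ⟨c, C, -, -, hle⟩ := h
  exact hle.mono fun a ha ↦ nonpos_iff_eq_zero.1 ((ha.2 G).trans_eq (by simp [hG]))

lemma tendsto_measureReal [IsFiniteMeasure ν] (h : ThompsonTendsto μ l ν) (G : Set X) :
    Tendsto (fun a ↦ (μ a).real G) l (𝓝 (ν.real G)) := by
  obtain ⟨c, C, hc, hC, hle⟩ := h
  have bound_tendsto {θ : α → ℝ≥0} (hθ : Tendsto θ l (𝓝 1)) :
      Tendsto (fun a ↦ (θ a • ν).real G) l (𝓝 (ν.real G)) := by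
    simpa [NNReal.smul_def] using
      ((NNReal.tendsto_coe.2 hθ).mul_const (ν.real G))
  refine tendsto_of_tendsto_of_tendsto_of_le_of_le' (bound_tendsto hc) (bound_tendsto hC) ?_ ?_
  · filter_upwards [hle] with a ⟨hlow, hup⟩
    have := isFiniteMeasure_of_le _ hup
    exact ENNReal.toReal_mono (by finiteness) (hlow G)
  · filter_upwards [hle] with a ⟨_, hup⟩
    exact ENNReal.toReal_mono (by finiteness) (hup G)

end

section Pi

variable {ι : Type*} [Fintype ι] {X : ι → Type*} [∀ i, MeasurableSpace (X i)]
  {μ μ' : α → ∀ i, Measure (X i)} {ν ν' : ∀ i, Measure (X i)}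

lemma pi [∀ i, SigmaFinite (ν i)] (h : ∀ i, ThompsonTendsto (μ · i) l (ν i)) :
    ThompsonTendsto (fun a ↦ Measure.pi (μ a)) l (Measure.pi ν) := by
  choose c C hc hC hle using h
  have prod_tendsto {θ : ι → α → ℝ≥0} (hθ : ∀ i, Tendsto (θ i) l (𝓝 1)) :
      Tendsto (fun a ↦ ∏ i, θ i a) l (𝓝 1) := by
    simpa using tendsto_finsetProd Finset.univ fun i _ ↦ hθ i
  refine ⟨_, _, prod_tendsto hc, prod_tendsto hC, ?_⟩
  filter_upwards [eventually_all.2 hle] with a ha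
  have (i : ι) : SigmaFinite (μ a i) := Measure.sigmaFinite_of_le _ (ha i).2
  rw [← measurePi_smul, ← measurePi_smul]
  exact ⟨measurePi_mono fun i ↦ (ha i).1, measurePi_mono fun i ↦ (ha i).2⟩

lemma pi_piecewise [DecidableEq ι] [∀ i, SigmaFinite (ν i)] [∀ i, SigmaFinite (ν' i)]
    (h : ∀ i, ThompsonTendsto (μ · i) l (ν i))
    (h' : ∀ i, ThompsonTendsto (μ' · i) l (ν' i)) (S : Finset ι) :
    ThompsonTendsto (fun a ↦ Measure.pi (S.piecewise (μ a) (μ' a))) l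
      (Measure.pi (S.piecewise ν ν')) := by
  have (i : ι) : SigmaFinite (S.piecewise ν ν' i) :=
    S.piecewise_cases ν ν' _ inferInstance inferInstance
  refine .pi fun i ↦ ?_
  by_cases hi : i ∈ S
  · simpa only [Finset.piecewise_eq_of_mem _ _ _ hi] using h i
  · simpa only [Finset.piecewise_eq_of_notMem _ _ _ hi] using h' i

/-- Only the terms in which exactly `d` coordinates follow the vanishing component survive: fewer
contribute nothing by hypothesis, more are killed by an extra factor `w a`. -/
lemma tendsto_measureReal_pi_smul_add_div_pow [DecidableEq ι] [∀ i, IsFiniteMeasure (ν i)]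
    [∀ i, IsFiniteMeasure (ν' i)] {w : α → ℝ≥0}
    (hw : Tendsto w l (𝓝 0)) (hw0 : ∀ᶠ a in l, w a ≠ 0)
    (h : ∀ i, ThompsonTendsto (μ · i) l (ν i)) (h' : ∀ i, ThompsonTendsto (μ' · i) l (ν' i))
    {G : Set (∀ i, X i)} {d : ℕ}
    (hG : ∀ S : Finset ι, S.card < d → Measure.pi (S.piecewise ν ν') G = 0) :
    Tendsto (fun a ↦ (Measure.pi fun i ↦ w a • μ a i + μ' a i).real G / (w a : ℝ) ^ d) l
      (𝓝 (∑ S ∈ Finset.powersetCard d Finset.univ,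
        (Measure.pi (S.piecewise ν ν')).real G)) := by
  have (S : Finset ι) (i : ι) : IsFiniteMeasure (S.piecewise ν ν' i) :=
    S.piecewise_cases ν ν' _ inferInstance inferInstance
  have term_tendsto (S : Finset ι) :
      Tendsto (fun a ↦ (w a : ℝ) ^ S.card * (Measure.pi (S.piecewise (μ a) (μ' a))).real G /
          (w a : ℝ) ^ d) l
        (𝓝 (if S.card = d then (Measure.pi (S.piecewise ν ν')).real G else 0)) := by
    have hS := pi_piecewise h h' S
    rcases lt_or_ge S.card d with hlt | hge
    · rw [if_neg hlt.ne]
      refine tendsto_const_nhds.congr' ?_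
      filter_upwards [hS.eventually_measure_eq_zero (hG S hlt)] with a ha
      simp [measureReal_def, ha]
    · exact tendsto_pow_mul_div_pow_of_le (NNReal.tendsto_coe.2 hw)
        (hw0.mono fun a ↦ NNReal.coe_ne_zero.2) (hS.tendsto_measureReal G) hge
  have sum_tendsto := tendsto_finsetSum Finset.univ fun S _ ↦ term_tendsto S
  rw [← Finset.sum_filter, Finset.univ_filter_card_eq] at sum_tendsto
  refine sum_tendsto.congr' ?_
  filter_upwards [eventually_all.2 fun i ↦ (h i).eventually_isFiniteMeasure,
    eventually_all.2 fun i ↦ (h' i).eventually_isFiniteMeasure] with a _ _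
  rw [measureReal_pi_smul_add, Finset.sum_div]

end Pi

end ThompsonTendsto

section SumEvents

variable {ι : Type*} [Fintype ι]

lemma measurableSet_sum_lt (t : ℝ) : MeasurableSet {a : ι → ℝ | ∑ i, a i < t} :=
  measurableSet_lt (by fun_prop) measurable_const

lemma measurePi_sum_lt_eq_zero {μ : ι → Measure ℝ} [∀ i, SigmaFinite (μ i)] {b : ι → ℝ}
    (hb : ∀ i, ∀ᵐ x ∂μ i, b i ≤ x) {t : ℝ} (ht : t ≤ ∑ i, b i) :
    Measure.pi μ {a | ∑ i, a i < t} = 0 := by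
  have coord_ge : ∀ᵐ a ∂Measure.pi μ, ∀ i, b i ≤ a i :=
    eventually_all.2 fun i ↦ Measure.tendsto_eval_ae_ae.eventually (hb i)
  refine measure_eq_zero_iff_ae_notMem.2 (coord_ge.mono fun a ha ↦ ?_)
  exact (ht.trans (Finset.sum_le_sum fun i _ ↦ ha i)).not_gt

lemma measurePi_sum_lt_congr {κ : Type*} [Fintype κ] (e : κ ≃ ι) (ν : Measure ℝ) [SigmaFinite ν]
    (t : ℝ) :
    Measure.pi (fun _ : κ ↦ ν) {a | ∑ k, a k < t} =
      Measure.pi (fun _ : ι ↦ ν) {a | ∑ i, a i < t} := by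
  rw [← (measurePreserving_piCongrLeft (fun _ : ι ↦ ν) e).measure_preimage_equiv]
  simp only [Set.preimage_ofPred_eq, MeasurableEquiv.coe_piCongrLeft, ← e.sum_comp,
    Equiv.piCongrLeft_apply_apply]

lemma measurePi_piecewise_dirac_sum_lt [DecidableEq ι] (S : Finset ι) (ν : Measure ℝ)
    [SigmaFinite ν] (c t : ℝ) :
    Measure.pi (S.piecewise (fun _ ↦ ν) fun _ ↦ Measure.dirac c) {a | ∑ i, a i < t} =
      Measure.pi (fun _ : Fin S.card ↦ ν)
        {a | ∑ k, a k < t - (Fintype.card ι - S.card : ℝ) * c} := by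
  let μ : ι → Measure ℝ := S.piecewise (fun _ ↦ ν) fun _ ↦ Measure.dirac c
  have (i : ι) : SigmaFinite (μ i) := S.piecewise_cases _ _ _ inferInstance inferInstance
  have μ_of_mem (i : S) : μ i = ν := S.piecewise_eq_of_mem _ _ i.2
  have μ_of_notMem {i : ι} (hi : i ∉ S) : μ i = Measure.dirac c := S.piecewise_eq_of_notMem _ _ hi
  have eq_c_off_S : ∀ᵐ a ∂Measure.pi μ, ∀ i ∉ S, a i = c := by
    refine eventually_all.2 fun i ↦ eventually_imp_distrib_left.2 fun hi ↦
      Measure.tendsto_eval_ae_ae.eventually (p := (· = c)) ?_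
    rw [μ_of_notMem hi, ae_dirac_eq]
    exact eventually_pure.2 rfl
  have event_ae_eq : {a : ι → ℝ | ∑ i, a i < t} =ᵐ[Measure.pi μ]
      S.restrict ⁻¹' {a | ∑ i, a i < t - (Fintype.card ι - S.card : ℝ) * c} := by
    filter_upwards [eq_c_off_S] with a ha
    refine propext ?_
    change ∑ i, a i < t ↔ ∑ i : S, a i < t - (Fintype.card ι - S.card : ℝ) * c
    have sum_compl : ∑ i ∈ Sᶜ, a i = (Fintype.card ι - S.card : ℝ) * c := by
      rw [Finset.sum_congr rfl fun i hi ↦ ha i (Finset.mem_compl.1 hi), Finset.sum_const,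
        Finset.card_compl, nsmul_eq_mul, Nat.cast_sub S.card_le_univ]
    rw [← Finset.sum_add_sum_compl S, sum_compl, Finset.sum_coe_sort S a, lt_sub_iff_add_lt]
  have restrict_preserving := measurePreserving_finsetRestrict (μ := μ) (S := S) fun i hi ↦ by
    rw [μ_of_notMem hi]; infer_instance
  rw [measure_congr event_ae_eq, restrict_preserving.measure_preimage
    (measurableSet_sum_lt _).nullMeasurableSet, funext μ_of_mem]
  exact (measurePi_sum_lt_congr S.equivFin.symm ν _).symm

/-- Below level `(card ι - d + 1) * c` the sum can stay only if at least `d` coordinates leave the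
atom at `c`. -/
lemma ThompsonTendsto.tendsto_measureReal_pi_sum_lt {α : Type*} {l : Filter α} {w : α → ℝ≥0}
    {σ τ : α → Measure ℝ} {ν : Measure ℝ} [IsFiniteMeasure ν] {c t : ℝ} {d : ℕ}
    (hw : Tendsto w l (𝓝 0)) (hw0 : ∀ᶠ a in l, w a ≠ 0) (hσ : ThompsonTendsto σ l ν)
    (hτ : ThompsonTendsto τ l (Measure.dirac c)) (hν : ∀ᵐ x ∂ν, 0 ≤ x) (hc : 0 ≤ c)
    (ht : t ≤ (Fintype.card ι - d + 1 : ℝ) * c) :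
    Tendsto (fun a ↦ (Measure.pi fun _ : ι ↦ w a • σ a + τ a).real {x | ∑ i, x i < t} /
        (w a : ℝ) ^ d) l
      (𝓝 ((Fintype.card ι).choose d * (Measure.pi fun _ : Fin d ↦ ν).real
        {x | ∑ k, x k < t - (Fintype.card ι - d : ℝ) * c})) := by
  classical
  have few_unsaturated_null (S : Finset ι) (hS : S.card < d) :
      Measure.pi (S.piecewise (fun _ ↦ ν) fun _ ↦ Measure.dirac c) {x | ∑ i, x i < t} = 0 := by
    have hS' : (S.card : ℝ) + 1 ≤ d := by exact_mod_cast hS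
    rw [measurePi_piecewise_dirac_sum_lt]
    refine measurePi_sum_lt_eq_zero (b := 0) (fun _ ↦ hν) ?_
    simp only [Pi.zero_apply, Finset.sum_const_zero]
    nlinarith
  have expansion := tendsto_measureReal_pi_smul_add_div_pow hw hw0 (fun _ : ι ↦ hσ) (fun _ ↦ hτ)
    few_unsaturated_null
  have exactly_d_unsaturated : ∀ S ∈ Finset.powersetCard d (Finset.univ : Finset ι),
      (Measure.pi (S.piecewise (fun _ ↦ ν) fun _ ↦ Measure.dirac c)).real {x | ∑ i, x i < t} =
        (Measure.pi fun _ : Fin d ↦ ν).real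
          {x | ∑ k, x k < t - (Fintype.card ι - d : ℝ) * c} := by
    intro S hS
    obtain rfl := (Finset.mem_powersetCard.1 hS).2
    exact congrArg ENNReal.toReal (measurePi_piecewise_dirac_sum_lt S ν c t)
  rwa [Finset.sum_congr rfl exactly_d_unsaturated, Finset.sum_const, Finset.card_powersetCard,
    Finset.card_univ, nsmul_eq_mul] at expansion

end SumEvents

lemma map_restrict_image_withDensity {f f' g : ℝ → ℝ} {s : Set ℝ} (hs : MeasurableSet s)
    (hf : ∀ x ∈ s, HasDerivWithinAt f (f' x) s x) (hg : Measurable g) (hgf : Set.LeftInvOn g f s)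
    (p : ℝ → ℝ≥0∞) :
    ((volume.withDensity p).restrict (f '' s)).map g =
      (volume.restrict s).withDensity fun x ↦ ENNReal.ofReal |f' x| * p (f x) := by
  ext E hE
  rw [Measure.map_apply hg hE, Measure.restrict_apply (hg hE), ← hgf.image_inter',
    withDensity_apply', withDensity_apply _ hE, Measure.restrict_restrict hE,
    lintegral_image_eq_lintegral_abs_deriv_mul (hE.inter hs)
      (fun x hx ↦ (hf x hx.2).mono Set.inter_subset_right)
      (hgf.injOn.mono Set.inter_subset_right)]

section Rate

variable {M s x ξ : ℝ}

/-- Information rate, capped at `M` bits, of a block with power gain `x` at signal-to-noise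
ratio `s`. -/
noncomputable def saturatedRate (M s x : ℝ) : ℝ := min M (Real.logb 2 (1 + x * s))

/-- Power gain needed for rate `ξ` at signal-to-noise ratio `s`; the inverse of
`Real.logb 2 (1 + · * s)`. -/
noncomputable def gainOfRate (s ξ : ℝ) : ℝ := (2 ^ ξ - 1) / s

lemma measurable_saturatedRate (M s : ℝ) : Measurable (saturatedRate M s) := by
  unfold saturatedRate Real.logb
  fun_prop

lemma hasDerivAt_gainOfRate (s ξ : ℝ) :
    HasDerivAt (gainOfRate s) (2 ^ ξ * Real.log 2 / s) ξ :=
  ((Real.hasStrictDerivAt_const_rpow two_pos ξ).hasDerivAt.sub_const 1).div_const s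

lemma gainOfRate_zero (s : ℝ) : gainOfRate s 0 = 0 := by
  simp [gainOfRate]

lemma strictMono_gainOfRate (hs : 0 < s) : StrictMono (gainOfRate s) := fun _ _ h ↦
  div_lt_div_of_pos_right (sub_lt_sub_right (Real.rpow_lt_rpow_of_exponent_lt one_lt_two h) 1) hs

lemma gainOfRate_nonneg (hs : 0 < s) (hξ : 0 ≤ ξ) : 0 ≤ gainOfRate s ξ :=
  (gainOfRate_zero s).symm.trans_le ((strictMono_gainOfRate hs).monotone hξ)

lemma gainOfRate_image_Icc (hs : 0 < s) (hM : 0 ≤ M) :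
    gainOfRate s '' Set.Icc 0 M = Set.Icc 0 (gainOfRate s M) := by
  have gain_cont : Continuous (gainOfRate s) :=
    continuous_iff_continuousAt.2 fun ξ ↦ (hasDerivAt_gainOfRate s ξ).continuousAt
  refine Set.Subset.antisymm ?_ ?_
  · simpa only [gainOfRate_zero] using
      (strictMono_gainOfRate hs).monotone.image_Icc_subset (a := 0) (b := M)
  · simpa only [gainOfRate_zero] using intermediate_value_Icc hM gain_cont.continuousOn

lemma saturatedRate_gainOfRate (hs : s ≠ 0) (hξ : ξ ≤ M) :
    saturatedRate M s (gainOfRate s ξ) = ξ := by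
  rw [saturatedRate, gainOfRate, div_mul_cancel₀ _ hs, add_sub_cancel,
    Real.logb_rpow two_pos (by norm_num), min_eq_right hξ]

lemma saturatedRate_of_gainOfRate_le (hs : 0 < s) (hx : gainOfRate s M ≤ x) :
    saturatedRate M s x = M := by
  have pow_le : (2 : ℝ) ^ M ≤ 1 + x * s := by
    have := (div_le_iff₀ hs).1 hx
    linarith
  refine min_eq_left ((Real.le_logb_iff_rpow_le one_lt_two ?_).2 pow_le)
  exact (Real.rpow_pos_of_pos two_pos M).trans_le pow_le

end Rate

section Fading

variable {m s : ℝ} {M : ℕ}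

lemma muN_eq_gammaMeasure (m : ℝ) : muN m = gammaMeasure m m := by
  unfold muN gammaMeasure gammaPDF gammaPDFReal fgamma
  simp only [mul_div_right_comm]

lemma isProbabilityMeasure_muN (hm : 0 < m) : IsProbabilityMeasure (muN m) :=
  muN_eq_gammaMeasure m ▸ isProbabilityMeasure_gammaMeasure hm hm

lemma measurable_fgamma (m : ℝ) : Measurable (fgamma m) :=
  .ite measurableSet_Ici (by fun_prop) measurable_const

lemma measurable_fAbar (m : ℝ) (M : ℕ) : Measurable (fAbar m M) :=
  .ite (measurableSet_Icc (a := 0) (b := (M : ℝ))) (by fun_prop) measurable_const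

lemma ae_muN_nonneg (m : ℝ) : ∀ᵐ x ∂muN m, 0 ≤ x := by
  refine (ae_withDensity_iff (measurable_fgamma m).ennreal_ofReal).2 (.of_forall fun x hx ↦ ?_)
  by_contra hneg
  exact hx (by rw [fgamma, if_neg hneg, ENNReal.ofReal_zero])

lemma ae_nuAbar_mem_Icc (m : ℝ) (M : ℕ) : ∀ᵐ ξ ∂nuAbar m M, ξ ∈ Set.Icc 0 (M : ℝ) := by
  refine (ae_withDensity_iff (measurable_fAbar m M).ennreal_ofReal).2 (.of_forall fun ξ hξ ↦ ?_)
  by_contra hout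
  exact hξ (by rw [fAbar, if_neg (mt Set.mem_Icc.2 hout), ENNReal.ofReal_zero])

lemma nuAbar_eq_withDensity_restrict (m : ℝ) (M : ℕ) :
    nuAbar m M = (volume.restrict (Set.Icc 0 (M : ℝ))).withDensity
      fun ξ ↦ ENNReal.ofReal (fAbar m M ξ) := by
  rw [← restrict_withDensity measurableSet_Icc]
  exact (Measure.restrict_eq_self_of_ae_mem (ae_nuAbar_mem_Icc m M)).symm

lemma two_pow_sub_one_pos (hM : 0 < M) : 0 < (2 : ℝ) ^ M - 1 :=
  sub_pos.2 (one_lt_pow₀ one_lt_two hM.ne')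

/-- Limit of `s ^ m` times the probability that a block with signal-to-noise ratio `s` does not
reach rate `M`. -/
noncomputable def codingGainFactor (m : ℝ) (M : ℕ) : ℝ :=
  (m * ((2 : ℝ) ^ M - 1)) ^ m / (m * Real.Gamma m)

lemma codingGainFactor_pos (hm : 0 < m) (hM : 0 < M) : 0 < codingGainFactor m M := by
  have := Real.Gamma_pos_of_pos hm
  have := two_pow_sub_one_pos hM
  unfold codingGainFactor
  positivity

lemma abs_deriv_gainOfRate_mul_fgamma (hm : 0 < m) (hM : 0 < M) (hs : 0 < s) {ξ : ℝ}
    (hξ : ξ ∈ Set.Icc 0 (M : ℝ)) :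
    |2 ^ ξ * Real.log 2 / s| * fgamma m (gainOfRate s ξ) =
      codingGainFactor m M / s ^ m * (Real.exp (-(m * gainOfRate s ξ)) * fAbar m M ξ) := by
  have := Real.Gamma_pos_of_pos hm
  have := Real.rpow_pos_of_pos hs m
  have pow_M_pos := two_pow_sub_one_pos hM
  have := Real.rpow_pos_of_pos pow_M_pos m
  have pow_ξ_nonneg := sub_nonneg.2 (Real.one_le_rpow one_le_two hξ.1)
  have : 0 < Real.log 2 := Real.log_pos one_lt_two
  rw [abs_of_nonneg (by positivity), fgamma, if_pos (gainOfRate_nonneg hs hξ.1), fAbar,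
    if_pos (Set.mem_Icc.1 hξ), codingGainFactor, Real.mul_rpow hm.le pow_M_pos.le]
  simp only [gainOfRate, Real.div_rpow pow_ξ_nonneg hs.le, Real.rpow_sub_one hs.ne']
  field_simp

/-- Weight of the unsaturated part of the law of the rate of a block. -/
noncomputable def unsaturatedWeight (m : ℝ) (M : ℕ) (s : ℝ) : ℝ≥0 :=
  (codingGainFactor m M / s ^ m).toNNReal

/-- Unsaturated part of the law of the rate of a block, scaled by the inverse of
`unsaturatedWeight`; it need not have total mass `1`. -/
noncomputable def unsaturatedLaw (m : ℝ) (M : ℕ) (s : ℝ) : Measure ℝ :=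
  (nuAbar m M).withDensity fun ξ ↦ ENNReal.ofReal (Real.exp (-(m * gainOfRate s ξ)))

/-- Probability that a block exceeds the power gain needed for rate `M`. -/
noncomputable def saturationProb (m : ℝ) (M : ℕ) (s : ℝ) : ℝ≥0 :=
  (muN m (Set.Ioi (gainOfRate s M))).toNNReal

lemma coe_unsaturatedWeight (hm : 0 < m) (hM : 0 < M) (hs : 0 < s) :
    (unsaturatedWeight m M s : ℝ) = codingGainFactor m M / s ^ m :=
  Real.coe_toNNReal _ (div_nonneg (codingGainFactor_pos hm hM).le (Real.rpow_nonneg hs.le m))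

lemma unsaturatedWeight_ne_zero (hm : 0 < m) (hM : 0 < M) (hs : 0 < s) :
    unsaturatedWeight m M s ≠ 0 :=
  (Real.toNNReal_pos.2 (div_pos (codingGainFactor_pos hm hM) (Real.rpow_pos_of_pos hs m))).ne'

lemma map_saturatedRate_restrict_Icc (hm : 0 < m) (hM : 0 < M) (hs : 0 < s) :
    ((muN m).restrict (Set.Icc 0 (gainOfRate s M))).map (saturatedRate M s) =
      unsaturatedWeight m M s • unsaturatedLaw m M s := by
  have exp_measurable : Measurable fun ξ ↦
      ENNReal.ofReal (Real.exp (-(m * gainOfRate s ξ))) := by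
    unfold gainOfRate
    fun_prop
  have fAbar_measurable := (measurable_fAbar m M).ennreal_ofReal
  rw [← gainOfRate_image_Icc hs M.cast_nonneg, muN,
    map_restrict_image_withDensity measurableSet_Icc
      (fun ξ _ ↦ (hasDerivAt_gainOfRate s ξ).hasDerivWithinAt) (measurable_saturatedRate M s)
      (fun ξ hξ ↦ saturatedRate_gainOfRate hs.ne' hξ.2),
    unsaturatedLaw, nuAbar_eq_withDensity_restrict,
    ← withDensity_mul _ fAbar_measurable exp_measurable,
    ENNReal.smul_def, ← withDensity_smul _ (fAbar_measurable.mul exp_measurable)]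
  refine withDensity_congr_ae ?_
  filter_upwards [ae_restrict_mem measurableSet_Icc] with ξ hξ
  have factor_nonneg : 0 ≤ codingGainFactor m M / s ^ m :=
    div_nonneg (codingGainFactor_pos hm hM).le (Real.rpow_nonneg hs.le m)
  rw [← ENNReal.ofReal_mul (abs_nonneg _), abs_deriv_gainOfRate_mul_fgamma hm hM hs hξ,
    ENNReal.ofReal_mul factor_nonneg, ENNReal.ofReal_mul (Real.exp_nonneg _)]
  simp only [Pi.smul_apply, Pi.mul_apply, smul_eq_mul, mul_comm]
  rfl

lemma map_saturatedRate_restrict_Ioi (hm : 0 < m) (hs : 0 < s) :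
    ((muN m).restrict (Set.Ioi (gainOfRate s M))).map (saturatedRate M s) =
      saturationProb m M s • Measure.dirac (M : ℝ) := by
  have := isProbabilityMeasure_muN hm
  have rate_ae_eq : saturatedRate M s =ᵐ[(muN m).restrict (Set.Ioi (gainOfRate s M))]
      fun _ ↦ (M : ℝ) :=
    (ae_restrict_mem measurableSet_Ioi).mono fun x hx ↦ saturatedRate_of_gainOfRate_le hs hx.le
  rw [Measure.map_congr rate_ae_eq, Measure.map_const, Measure.restrict_apply_univ,
    ENNReal.smul_def, saturationProb, ENNReal.coe_toNNReal (measure_ne_top _ _)]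

lemma map_saturatedRate_muN (hm : 0 < m) (hM : 0 < M) (hs : 0 < s) :
    (muN m).map (saturatedRate M s) =
      unsaturatedWeight m M s • unsaturatedLaw m M s +
        saturationProb m M s • Measure.dirac (M : ℝ) := by
  have threshold_nonneg : 0 ≤ gainOfRate s M := gainOfRate_nonneg hs M.cast_nonneg
  have muN_split : muN m = (muN m).restrict (Set.Icc 0 (gainOfRate s M)) +
      (muN m).restrict (Set.Ioi (gainOfRate s M)) := by
    rw [← Measure.restrict_union (Set.disjoint_left.2 fun x hx hx' ↦ hx.2.not_gt hx')
      measurableSet_Ioi, Set.Icc_union_Ioi_eq_Ici threshold_nonneg]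
    exact (Measure.restrict_eq_self_of_ae_mem (ae_muN_nonneg m)).symm
  rw [← map_saturatedRate_restrict_Icc hm hM hs, ← map_saturatedRate_restrict_Ioi hm hs,
    ← Measure.map_add _ _ (measurable_saturatedRate M s), ← muN_split]

lemma tendsto_unsaturatedWeight (hm : 0 < m) (M : ℕ) :
    Tendsto (unsaturatedWeight m M) atTop (𝓝 0) := by
  rw [← Real.toNNReal_zero]
  exact tendsto_real_toNNReal ((tendsto_rpow_atTop hm).const_div_atTop (codingGainFactor m M))

lemma exp_neg_mul_gainOfRate_mem_Icc (hm : 0 < m) (hs : 0 < s) {ξ : ℝ}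
    (hξ : ξ ∈ Set.Icc 0 (M : ℝ)) :
    Real.exp (-(m * gainOfRate s ξ)) ∈ Set.Icc (Real.exp (-(m * gainOfRate s M))) 1 := by
  have gain_le := (strictMono_gainOfRate hs).monotone hξ.2
  have gain_nonneg := gainOfRate_nonneg hs hξ.1
  refine ⟨by gcongr, Real.exp_le_one_iff.2 (neg_nonpos.2 (by positivity))⟩

lemma thompsonTendsto_unsaturatedLaw (hm : 0 < m) (M : ℕ) :
    ThompsonTendsto (unsaturatedLaw m M) atTop (nuAbar m M) := by
  have gain_tendsto : Tendsto (fun s ↦ gainOfRate s M) atTop (𝓝 0) :=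
    tendsto_id.const_div_atTop _
  have low_tendsto : Tendsto (fun s ↦ (Real.exp (-(m * gainOfRate s M))).toNNReal) atTop
      (𝓝 1) := by
    simpa using tendsto_real_toNNReal (gain_tendsto.const_mul m).neg.rexp
  refine .withDensity low_tendsto (tendsto_const_nhds (x := 1)) ?_
  filter_upwards [eventually_gt_atTop 0] with s hs
  filter_upwards [ae_nuAbar_mem_Icc m M] with ξ hξ
  obtain ⟨hlow, hup⟩ := exp_neg_mul_gainOfRate_mem_Icc hm hs hξ
  exact ⟨ENNReal.ofReal_le_ofReal hlow, ENNReal.ofReal_le_one.2 hup⟩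

lemma isFiniteMeasure_unsaturatedLaw (hm : 0 < m) (hM : 0 < M) (hs : 0 < s) :
    IsFiniteMeasure (unsaturatedLaw m M s) := by
  have := isProbabilityMeasure_muN hm
  have weight_smul_le : unsaturatedWeight m M s • unsaturatedLaw m M s ≤
      (muN m).map (saturatedRate M s) :=
    map_saturatedRate_muN hm hM hs ▸ Measure.le_add_right le_rfl
  have := isFiniteMeasure_of_le _ weight_smul_le
  rw [← inv_smul_smul₀ (unsaturatedWeight_ne_zero hm hM hs) (unsaturatedLaw m M s)]
  infer_instance

lemma isFiniteMeasure_nuAbar (hm : 0 < m) (hM : 0 < M) : IsFiniteMeasure (nuAbar m M) :=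
  (thompsonTendsto_unsaturatedLaw hm M).isFiniteMeasure <|
    (eventually_gt_atTop 0).mono fun _ hs ↦ isFiniteMeasure_unsaturatedLaw hm hM hs

lemma unsaturatedWeight_mul_add_saturationProb (hm : 0 < m) (hM : 0 < M) (hs : 0 < s) :
    unsaturatedWeight m M s * (unsaturatedLaw m M s).real Set.univ + saturationProb m M s = 1 := by
  have := isProbabilityMeasure_muN hm
  have := isFiniteMeasure_unsaturatedLaw hm hM hs
  have total_mass : ((muN m).map (saturatedRate M s)).real Set.univ = 1 := by
    rw [map_measureReal_apply (measurable_saturatedRate M s) .univ, Set.preimage_univ,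
      probReal_univ]
  rw [map_saturatedRate_muN hm hM hs, measureReal_add_apply] at total_mass
  simpa [NNReal.smul_def] using total_mass

lemma tendsto_saturationProb (hm : 0 < m) (hM : 0 < M) :
    Tendsto (saturationProb m M) atTop (𝓝 1) := by
  have := isFiniteMeasure_nuAbar hm hM
  have weight_tendsto := NNReal.tendsto_coe.2 (tendsto_unsaturatedWeight hm M)
  have mass_tendsto := (thompsonTendsto_unsaturatedLaw hm M).tendsto_measureReal Set.univ
  have compl_tendsto := (weight_tendsto.mul mass_tendsto).const_sub 1
  rw [NNReal.coe_zero, zero_mul, sub_zero] at compl_tendsto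
  refine NNReal.tendsto_coe.1 (compl_tendsto.congr' ?_)
  filter_upwards [eventually_gt_atTop 0] with s hs
  exact sub_eq_of_eq_add' (unsaturatedWeight_mul_add_saturationProb hm hM hs).symm

lemma PoutL_eq_measureReal_pi (hm : 0 < m) {B : ℕ} (hB : 0 < B) (M : ℕ) (s R : ℝ) :
    PoutL m B M s R = (Measure.pi fun _ : Fin B ↦ (muN m).map (saturatedRate M s)).real
      {a | ∑ b, a b < B * R} := by
  have := isProbabilityMeasure_muN hm
  have rate_measurable : Measurable fun (γ : Fin B → ℝ) b ↦ saturatedRate M s (γ b) :=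
    measurable_pi_lambda _ fun b ↦ (measurable_saturatedRate M s).comp (measurable_pi_apply b)
  rw [← Measure.pi_map_pi fun _ ↦ (measurable_saturatedRate M s).aemeasurable,
    map_measureReal_apply rate_measurable (measurableSet_sum_lt _), PoutL, measureReal_def]
  simp only [one_div, inv_mul_lt_iff₀ (Nat.cast_pos.2 hB : (0 : ℝ) < B), saturatedRate,
    Set.preimage_ofPred_eq]

lemma tendsto_PoutL_div_unsaturatedWeight_pow (hm : 0 < m) {B : ℕ} (hB : 0 < B) (hM : 0 < M)
    {R : ℝ} {d : ℕ} (hd : ((d : ℝ) - 1) * M ≤ B * (M - R)) :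
    Tendsto (fun s ↦ PoutL m B M s R / (unsaturatedWeight m M s : ℝ) ^ d) atTop
      (𝓝 (B.choose d * (Measure.pi fun _ : Fin d ↦ nuAbar m M).real
        {a | ∑ k, a k < B * R - (B - d : ℝ) * M})) := by
  have := isFiniteMeasure_nuAbar hm hM
  have level_le : B * R ≤ (Fintype.card (Fin B) - d + 1 : ℝ) * M := by
    rw [Fintype.card_fin]
    linarith
  have expansion := ThompsonTendsto.tendsto_measureReal_pi_sum_lt (ι := Fin B)
    (tendsto_unsaturatedWeight hm M)
    ((eventually_gt_atTop 0).mono fun _ ↦ unsaturatedWeight_ne_zero hm hM)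
    (thompsonTendsto_unsaturatedLaw hm M)
    (.smul_of_tendsto_one (tendsto_saturationProb hm hM) (Measure.dirac (M : ℝ)))
    ((ae_nuAbar_mem_Icc m M).mono fun _ h ↦ h.1) M.cast_nonneg level_le
  rw [Fintype.card_fin] at expansion
  refine expansion.congr' ?_
  filter_upwards [eventually_gt_atTop 0] with s hs
  rw [PoutL_eq_measureReal_pi hm hB, map_saturatedRate_muN hm hM hs]

end Fading

section SingletonBound

variable {B d : ℕ} {M R : ℝ}

lemma sub_one_mul_le_of_eq_one_add_floor (hM : 0 < M)
    (hd : (d : ℤ) = 1 + ⌊(B : ℝ) * (1 - R / M)⌋) : ((d : ℝ) - 1) * M ≤ B * (M - R) := by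
  have sub_one_le : (d : ℝ) - 1 ≤ B * (1 - R / M) := by
    have := Int.floor_le ((B : ℝ) * (1 - R / M))
    rw [← sub_eq_of_eq_add' hd] at this
    exact_mod_cast this
  calc ((d : ℝ) - 1) * M ≤ B * (1 - R / M) * M := mul_le_mul_of_nonneg_right sub_one_le hM.le
    _ = B * (M - R) := by field_simp

lemma le_of_sub_one_mul_le (hM : 0 < M) (hB : 0 < B) (hR : 0 < R)
    (hd : ((d : ℝ) - 1) * M ≤ B * (M - R)) : d ≤ B := by
  have sub_one_mul_lt : ((d : ℝ) - 1) * M < B * M := hd.trans_lt (by gcongr; linarith)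
  have := lt_of_mul_lt_mul_right sub_one_mul_lt hM.le
  exact Nat.lt_succ_iff.1 (by exact_mod_cast sub_lt_iff_lt_add.1 this)

end SingletonBound

theorem stmt_6_general (m : ℝ) (hm : 0 < m) (B M : ℕ) (hB : 0 < B) (hM : 0 < M) (R : ℝ)
    (d : ℕ) (hd : ((d : ℝ) - 1) * M ≤ B * (M - R)) :
    Tendsto (fun s : ℝ ↦ s ^ (m * (d : ℝ)) * PoutL m B M s R) atTop
      (𝓝 (((Measure.pi fun _ : Fin d ↦ nuAbar m M)
          {a : Fin d → ℝ | ∑ k, a k < (B : ℝ) * R - ((B : ℝ) - (d : ℝ)) * (M : ℝ)}).toReal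
        * (B.choose d : ℝ)
        * (m * ((2 : ℝ) ^ M - 1)) ^ (m * (d : ℝ)) / (m * Real.Gamma m) ^ d)) := by
  convert ((tendsto_PoutL_div_unsaturatedWeight_pow hm hB hM hd).const_mul
    (codingGainFactor m M ^ d)).congr' ?_ using 2
  · have := two_pow_sub_one_pos hM
    rw [codingGainFactor, div_pow, Real.rpow_mul_natCast (by positivity), measureReal_def]
    ring
  · filter_upwards [eventually_gt_atTop 0] with s hs
    have := (codingGainFactor_pos hm hM).ne'
    rw [coe_unsaturatedWeight hm hM hs, div_pow, ← Real.rpow_mul_natCast hs.le]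
    field_simp

/-- asymptotic coding gain constant of the lower bound to the outage
probability: s^{m d} P^ℓ_out(s,R) → K_ℓ as s → ∞, with d = d_B(R) the Singleton bound. -/
theorem stmt_6 (m : ℝ) (hm : 0 < m) (B M : ℕ) (hB : 0 < B) (hM : 0 < M)
    (R : ℝ) (hR0 : 0 < R) (hRM : R < (M : ℝ))
    (d : ℕ) (hd : (d : ℤ) = 1 + ⌊(B : ℝ) * (1 - R / (M : ℝ))⌋)
    (K : ℝ)
    (hK : K = ((Measure.pi fun _ : Fin d => nuAbar m M)
          {a : Fin d → ℝ | ∑ k, a k < (B : ℝ) * R - ((B : ℝ) - (d : ℝ)) * (M : ℝ)}).toReal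
        * (B.choose (B - d) : ℝ)
        * (m * ((2:ℝ) ^ M - 1)) ^ (m * (d : ℝ)) / (m * Real.Gamma m) ^ d) :
    Filter.Tendsto (fun s : ℝ => s ^ (m * (d : ℝ)) * PoutL m B M s R)
      Filter.atTop (nhds K) := by
  have hM' : (0 : ℝ) < M := Nat.cast_pos.2 hM
  have hd' := sub_one_mul_le_of_eq_one_add_floor hM' hd
  rw [hK, Nat.choose_symm (le_of_sub_one_mul_le hM' hB hR0 hd')]
  exact stmt_6_general m hm B M hB hM R d hd'
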